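/- Define h : (ℕ → Bool) → ℝ by h(x) = Σ_{i=0}^∞ 2·χ(x(i))/3^{i+1}, where χ(true) = 1 and χ(false) = 0. Let (x_k)_{k∈ℕ} be a sequence of elements of ℕ → Bool. Then the following are equivalent: (a) for every n there exists s such that for all k, k' ≥ s and all i ≤ n, x_k(i) = x_{k'}(i); (b) the sequence of real numbers (h(x_k))_{k∈ℕ} is a Cauchy sequence. -/

import Mathlib

/-- The Cantor middle-thirds embedding of Cantor space into `[0,1]`. -/
noncomputable def cantorMap (x : ℕ → Bool) : ℝ :=
  ∑' i : ℕ, 2 * (if x i then (1 : ℝ) else 0) / 3 ^ (i + 1)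

theorem cantorMap_summable (x : ℕ → Bool) :
    Summable (fun i : ℕ => 2 * (if x i then (1 : ℝ) else 0) / 3 ^ (i + 1)) := by
  have hg : Summable (fun i : ℕ => (2 / 3 : ℝ) * (1 / 3) ^ i) :=
    (summable_geometric_of_lt_one (by norm_num) (by norm_num)).mul_left _
  refine Summable.of_nonneg_of_le (fun i => ?_) (fun i => ?_) hg
  · split_ifs <;> positivity
  · have h : (2 / 3 : ℝ) * (1 / 3) ^ i = 2 * 1 / 3 ^ (i + 1) := by
      rw [one_div, inv_pow, pow_succ]; field_simp
    rw [h]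
    gcongr
    split_ifs <;> norm_num

theorem cantorMap_nonneg (x : ℕ → Bool) : 0 ≤ cantorMap x :=
  tsum_nonneg (fun i => by split_ifs <;> positivity)

theorem cantorMap_le_one (x : ℕ → Bool) : cantorMap x ≤ 1 := by
  have hg : HasSum (fun i : ℕ => (2 / 3 : ℝ) * (1 / 3) ^ i) ((2 / 3) * (1 - 1 / 3)⁻¹) :=
    (hasSum_geometric_of_lt_one (by norm_num) (by norm_num)).mul_left _
  have h := (cantorMap_summable x).hasSum
  have h1 := hasSum_le (fun i => ?_) h hg
  · calc cantorMap x ≤ _ := h1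
      _ = 1 := by norm_num
  · have h : (2 / 3 : ℝ) * (1 / 3) ^ i = 2 * 1 / 3 ^ (i + 1) := by
      rw [one_div, inv_pow, pow_succ]; field_simp
    rw [h]
    gcongr
    split_ifs <;> norm_num

theorem cantorMap_rec (x : ℕ → Bool) :
    cantorMap x = (2 * (if x 0 then (1 : ℝ) else 0) + cantorMap (fun i => x (i + 1))) / 3 := by
  unfold cantorMap
  rw [(cantorMap_summable x).tsum_eq_zero_add, add_div, ← tsum_div_const]
  congr 1
  · simp
  · refine tsum_congr (fun i => ?_)
    rw [div_div, ← pow_succ]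

theorem cantorMap_close (n : ℕ) : ∀ x y : ℕ → Bool, (∀ i < n, x i = y i) →
    |cantorMap x - cantorMap y| ≤ (1 / 3) ^ n := by
  induction n with
  | zero =>
    intro x y _
    rw [pow_zero, abs_le]
    constructor <;> linarith [cantorMap_nonneg x, cantorMap_nonneg y, cantorMap_le_one x,
      cantorMap_le_one y]
  | succ n ih =>
    intro x y h
    have h1 := ih (fun i => x (i + 1)) (fun i => y (i + 1)) (fun i hi => h (i + 1) (by omega))
    rw [cantorMap_rec x, cantorMap_rec y, h 0 (by omega), pow_succ]
    rw [abs_le] at h1 ⊢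
    constructor <;> linarith [h1.1, h1.2]

theorem cantorMap_sep (n : ℕ) : ∀ x y : ℕ → Bool,
    |cantorMap x - cantorMap y| < (1 / 3) ^ n → ∀ i < n, x i = y i := by
  induction n with
  | zero => intro x y _ i hi; omega
  | succ n ih =>
    intro x y h
    have hp : (1 / 3 : ℝ) ^ n ≤ 1 := pow_le_one₀ (by norm_num) (by norm_num)
    rw [cantorMap_rec x, cantorMap_rec y, pow_succ, abs_lt] at h
    have a1 := cantorMap_nonneg (fun i => x (i + 1))
    have a2 := cantorMap_le_one (fun i => x (i + 1))
    have b1 := cantorMap_nonneg (fun i => y (i + 1))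
    have b2 := cantorMap_le_one (fun i => y (i + 1))
    have h0 : x 0 = y 0 := by
      cases hx : x 0 <;> cases hy : y 0 <;> simp only [hx, hy] at h ⊢ <;>
        norm_num at h <;> linarith [h.1, h.2]
    rw [h0] at h
    have h1 := ih (fun i => x (i + 1)) (fun i => y (i + 1)) (by
      rw [abs_lt]; constructor <;> linarith [h.1, h.2])
    intro i hi
    cases i with
    | zero => exact h0
    | succ j => exact h1 j (by omega)

/-- A sequence `(x_k)` in Cantor space is Cauchy (in the sense that for every `n`
the coordinates `i ≤ n` eventually stabilize along the sequence) if and only if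
the image sequence `(h(x_k))` under the middle-thirds map is a Cauchy sequence
of real numbers. -/
theorem cantorMap_cauchySeq_iff (x : ℕ → ℕ → Bool) :
    (∀ n : ℕ, ∃ s : ℕ, ∀ k ≥ s, ∀ k' ≥ s, ∀ i ≤ n, x k i = x k' i) ↔
      CauchySeq (fun k => cantorMap (x k)) := by
  rw [Metric.cauchySeq_iff]
  constructor
  · intro h ε hε
    obtain ⟨n, hn⟩ := exists_pow_lt_of_lt_one hε (by norm_num : (1 / 3 : ℝ) < 1)
    obtain ⟨s, hs⟩ := h n
    refine ⟨s, fun k hk k' hk' => ?_⟩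
    rw [Real.dist_eq]
    exact (cantorMap_close n _ _ (fun i hi => hs k hk k' hk' i hi.le)).trans_lt hn
  · intro h n
    obtain ⟨s, hs⟩ := h ((1 / 3) ^ (n + 1)) (by positivity)
    refine ⟨s, fun k hk k' hk' i hi => ?_⟩
    have h1 := hs k hk k' hk'
    rw [Real.dist_eq] at h1
    exact cantorMap_sep (n + 1) _ _ h1 i (by omega)
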